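/- Let k ≥ 2 be an integer and M ≥ 0. Let (ℱ_i)_{i=0}^n be a filtration on a probability space and let v_1, …, v_n be a martingale difference sequence with respect to it (each v_i is ℱ_i-measurable, integrable, and E[v_i | ℱ_{i−1}] = 0 almost surely), such that E[|v_i|^l] ≤ M for all l = 1, …, k and all i. Then there exists a constant C_k depending only on k (not on n, M, or the sequence) such that E[|n^{−1/2} ∑_{i=1}^n v_i|^k] ≤ C_k·M. -/

import Mathlib

open MeasureTheory

/-!
The tangent-line inequality for the convex function `‖·‖ ^ p`, taken at `x + r • y`, and a bound on
the variation of its gradient give an expansion of `‖x + r • y‖ ^ p` around `x` whose first-order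
term is linear in `y` and whose error is at most `c * r ^ 2 * (‖x‖ ^ p + ‖y‖ ^ p)`. Adding a
martingale difference `r • V` to `X` kills the first-order term, so
`E‖X + r • V‖ ^ p ≤ (1 + c * r ^ 2) * E‖X‖ ^ p + c * r ^ 2 * M`: the quantity `E‖X‖ ^ p + M` grows
by a factor of at most `exp (c * r ^ 2)`. With `r = n ^ (-1/2)`, the `n` steps cost `exp c`.
-/

section NormExpansion

open scoped RealInnerProductSpace

lemma rpow_sub_rpow_le_mul_sub {p a b : ℝ} (hp : 1 ≤ p) (ha : 0 ≤ a) (hb : 0 ≤ b) :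
    a ^ p - b ^ p ≤ p * a ^ (p - 1) * (a - b) := by
  rcases ha.eq_or_lt with rfl | ha
  · rcases hp.eq_or_lt with rfl | hp
    · simp
    · rw [Real.zero_rpow (by linarith), Real.zero_rpow (by linarith)]
      have := Real.rpow_nonneg hb p
      linarith
  have bernoulli : 1 + p * (b / a - 1) ≤ (b / a) ^ p := by
    simpa using one_add_mul_self_le_rpow_one_add (s := b / a - 1)
      (by linarith [div_nonneg hb ha.le]) hp
  rw [Real.div_rpow hb ha.le, le_div_iff₀ (by positivity)] at bernoulli
  have split : a ^ p = a ^ (p - 1) * a := by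
    rw [← Real.rpow_add_one ha.ne', sub_add_cancel]
  have : (1 + p * (b / a - 1)) * a ^ p = a ^ p - p * a ^ (p - 1) * (a - b) := by
    rw [split]
    field_simp
    ring
  linarith

-- The factor `b` compensates for the unbounded derivative of `t ^ s` at `0` when `s < 1`.
lemma abs_rpow_sub_rpow_mul_le {s a b : ℝ} (hs : 0 ≤ s) (ha : 0 ≤ a) (hb : 0 ≤ b) :
    |a ^ s - b ^ s| * b ≤ (s + 1) * max a b ^ s * |a - b| := by
  have rpow_succ {x : ℝ} (hx : 0 ≤ x) : x ^ (s + 1) = x ^ s * x :=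
    Real.rpow_add_one' hx (by linarith)
  have tangent {x y : ℝ} (hx : 0 ≤ x) (hy : 0 ≤ y) :
      x ^ s * x - y ^ s * y ≤ (s + 1) * x ^ s * (x - y) := by
    simpa only [rpow_succ hx, rpow_succ hy, add_sub_cancel_right] using
      rpow_sub_rpow_le_mul_sub (by linarith : 1 ≤ s + 1) hx hy
  rcases le_total a b with hab | hab
  · have hpow : a ^ s ≤ b ^ s := Real.rpow_le_rpow ha hab hs
    have : a ^ s * a ≤ a ^ s * b := by gcongr
    rw [max_eq_right hab, abs_sub_comm, abs_of_nonneg (sub_nonneg.2 hpow), abs_sub_comm,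
      abs_of_nonneg (sub_nonneg.2 hab)]
    linarith [tangent hb ha]
  · have hpow : b ^ s ≤ a ^ s := Real.rpow_le_rpow hb hab hs
    have : a ^ s * b ≤ a ^ s * a := by gcongr
    rw [max_eq_left hab, abs_of_nonneg (sub_nonneg.2 hpow), abs_of_nonneg (sub_nonneg.2 hab)]
    linarith [tangent ha hb]

variable {E : Type*} [NormedAddCommGroup E] [InnerProductSpace ℝ E]

lemma norm_add_rpow_le_add_inner {p : ℝ} (hp : 2 ≤ p) (x y : E) :
    ‖x + y‖ ^ p ≤ ‖x‖ ^ p + p * (‖x + y‖ ^ (p - 2) * ⟪x + y, y⟫) := by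
  have tangent := rpow_sub_rpow_le_mul_sub (by linarith : 1 ≤ p) (norm_nonneg (x + y))
    (norm_nonneg x)
  have cauchy_schwarz : ‖x + y‖ * (‖x + y‖ - ‖x‖) ≤ ⟪x + y, y⟫ := by
    have : ⟪x + y, y⟫ = ‖x + y‖ * ‖x + y‖ - ⟪x + y, x⟫ := by
      rw [← real_inner_self_eq_norm_mul_norm, ← inner_sub_right, add_sub_cancel_left]
    linarith [real_inner_le_norm (x + y) x]
  have split : ‖x + y‖ ^ (p - 1) = ‖x + y‖ ^ (p - 2) * ‖x + y‖ := by
    rw [← Real.rpow_add_one' (norm_nonneg _) (by linarith)]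
    ring_nf
  have : p * (‖x + y‖ ^ (p - 2) * (‖x + y‖ * (‖x + y‖ - ‖x‖))) ≤
      p * (‖x + y‖ ^ (p - 2) * ⟪x + y, y⟫) := by gcongr
  rw [split] at tangent
  linarith

lemma norm_add_rpow_le_second_order {p : ℝ} (hp : 2 ≤ p) (x y : E) :
    ‖x + y‖ ^ p ≤ ‖x‖ ^ p + p * (‖x‖ ^ (p - 2) * ⟪x, y⟫)
      + p ^ 2 * ((‖x‖ + ‖y‖) ^ (p - 2) * ‖y‖ ^ 2) := by
  have hs : 0 ≤ p - 2 := by linarith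
  have weight_le : ‖x + y‖ ^ (p - 2) ≤ (‖x‖ + ‖y‖) ^ (p - 2) := by
    gcongr
    exact norm_add_le x y
  have weight_variation : (‖x + y‖ ^ (p - 2) - ‖x‖ ^ (p - 2)) * ⟪x, y⟫ ≤
      (p - 1) * ((‖x‖ + ‖y‖) ^ (p - 2) * ‖y‖ ^ 2) :=
    calc (‖x + y‖ ^ (p - 2) - ‖x‖ ^ (p - 2)) * ⟪x, y⟫
        ≤ |‖x + y‖ ^ (p - 2) - ‖x‖ ^ (p - 2)| * (‖x‖ * ‖y‖) := by
          refine (le_abs_self _).trans ?_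
          rw [abs_mul]
          gcongr
          exact abs_real_inner_le_norm x y
      _ = |‖x + y‖ ^ (p - 2) - ‖x‖ ^ (p - 2)| * ‖x‖ * ‖y‖ := by ring
      _ ≤ (p - 2 + 1) * max ‖x + y‖ ‖x‖ ^ (p - 2) * |‖x + y‖ - ‖x‖| * ‖y‖ := by
          gcongr ?_ * _
          exact abs_rpow_sub_rpow_mul_le hs (norm_nonneg _) (norm_nonneg _)
      _ ≤ (p - 2 + 1) * (‖x‖ + ‖y‖) ^ (p - 2) * ‖y‖ * ‖y‖ := by
          gcongr
          · exact max_le (norm_add_le x y) (le_add_of_nonneg_right (norm_nonneg y))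
          · simpa using abs_norm_sub_norm_le (x + y) x
      _ = (p - 1) * ((‖x‖ + ‖y‖) ^ (p - 2) * ‖y‖ ^ 2) := by ring
  calc ‖x + y‖ ^ p ≤ ‖x‖ ^ p + p * (‖x + y‖ ^ (p - 2) * ⟪x + y, y⟫) :=
        norm_add_rpow_le_add_inner hp x y
    _ = ‖x‖ ^ p + p * (‖x‖ ^ (p - 2) * ⟪x, y⟫)
          + p * ((‖x + y‖ ^ (p - 2) - ‖x‖ ^ (p - 2)) * ⟪x, y⟫ + ‖x + y‖ ^ (p - 2) * ‖y‖ ^ 2) := by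
        rw [inner_add_left, real_inner_self_eq_norm_sq]
        ring
    _ ≤ ‖x‖ ^ p + p * (‖x‖ ^ (p - 2) * ⟪x, y⟫)
          + p * ((p - 1) * ((‖x‖ + ‖y‖) ^ (p - 2) * ‖y‖ ^ 2)
            + (‖x‖ + ‖y‖) ^ (p - 2) * ‖y‖ ^ 2) := by gcongr
    _ = _ := by ring

lemma rpow_sub_two_mul_sq {p a : ℝ} (hp : 0 < p) (ha : 0 ≤ a) : a ^ (p - 2) * a ^ 2 = a ^ p := by
  rw [← Real.rpow_two, ← Real.rpow_add' ha (by linarith), sub_add_cancel]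

lemma add_rpow_le_two_rpow_mul {p a b : ℝ} (hp : 1 ≤ p) (ha : 0 ≤ a) (hb : 0 ≤ b) :
    (a + b) ^ p ≤ 2 ^ (p - 1) * (a ^ p + b ^ p) := by
  lift a to NNReal using ha
  lift b to NNReal using hb
  exact_mod_cast NNReal.rpow_add_le_mul_rpow_add_rpow a b hp

lemma norm_add_smul_rpow_le {p r : ℝ} (hp : 2 ≤ p) (hr : |r| ≤ 1) (x y : E) :
    ‖x + r • y‖ ^ p ≤ ‖x‖ ^ p + p * r * ⟪‖x‖ ^ (p - 2) • x, y⟫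
      + p ^ 2 * 2 ^ (p - 1) * r ^ 2 * (‖x‖ ^ p + ‖y‖ ^ p) := by
  have norm_smul_le : ‖r • y‖ ≤ ‖y‖ := by
    rw [norm_smul, Real.norm_eq_abs]
    exact mul_le_of_le_one_left (norm_nonneg y) hr
  have error_le : (‖x‖ + ‖r • y‖) ^ (p - 2) * ‖r • y‖ ^ 2 ≤
      r ^ 2 * (2 ^ (p - 1) * (‖x‖ ^ p + ‖y‖ ^ p)) :=
    calc (‖x‖ + ‖r • y‖) ^ (p - 2) * ‖r • y‖ ^ 2
        = r ^ 2 * ((‖x‖ + ‖r • y‖) ^ (p - 2) * ‖y‖ ^ 2) := by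
          rw [norm_smul r y, mul_pow, Real.norm_eq_abs, sq_abs]
          ring
      _ ≤ r ^ 2 * ((‖x‖ + ‖y‖) ^ (p - 2) * (‖x‖ + ‖y‖) ^ 2) := by
          gcongr
          exact le_add_of_nonneg_left (norm_nonneg x)
      _ = r ^ 2 * (‖x‖ + ‖y‖) ^ p := by
          rw [rpow_sub_two_mul_sq (by linarith) (by positivity)]
      _ ≤ r ^ 2 * (2 ^ (p - 1) * (‖x‖ ^ p + ‖y‖ ^ p)) := by
          gcongr
          exact add_rpow_le_two_rpow_mul (by linarith) (norm_nonneg x) (norm_nonneg y)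
  calc ‖x + r • y‖ ^ p
      ≤ ‖x‖ ^ p + p * (‖x‖ ^ (p - 2) * ⟪x, r • y⟫)
          + p ^ 2 * ((‖x‖ + ‖r • y‖) ^ (p - 2) * ‖r • y‖ ^ 2) :=
        norm_add_rpow_le_second_order hp x (r • y)
    _ ≤ ‖x‖ ^ p + p * (‖x‖ ^ (p - 2) * ⟪x, r • y⟫)
          + p ^ 2 * (r ^ 2 * (2 ^ (p - 1) * (‖x‖ ^ p + ‖y‖ ^ p))) := by gcongr
    _ = _ := by
        rw [real_inner_smul_left, real_inner_smul_right]
        ring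

end NormExpansion

section MartingaleDifference

open scoped ENNReal

variable {Ω E : Type*} {m₀ : MeasurableSpace Ω} {μ : Measure Ω} [NormedAddCommGroup E]
  [NormedSpace ℝ E]

lemma memLp_sum_smul {p : ℝ≥0∞} {v : ℕ → Ω → E} {n : ℕ}
    (hvp : ∀ i, 1 ≤ i → i ≤ n → MemLp (v i) p μ) (a : ℕ → ℝ) :
    MemLp (fun ω => ∑ i ∈ Finset.Icc 1 n, a i • v i ω) p μ :=
  memLp_finsetSum _ fun i hi => by
    obtain ⟨hi, hin⟩ := Finset.mem_Icc.1 hi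
    exact (hvp i hi hin).const_smul (a i)

/-- `v 1, …, v n` is a martingale difference sequence with respect to `ℱ 0 ≤ … ≤ ℱ n`: the noise
whose normalised sums have bounded moments. Sequences and filtrations are indexed by `ℕ`, and
`v 0` and `v i` for `i > n` are unconstrained. -/
structure IsMartingaleDifference (v : ℕ → Ω → E) (ℱ : Filtration ℕ m₀) (μ : Measure Ω) (n : ℕ) :
    Prop where
  stronglyMeasurable : ∀ i, 1 ≤ i → i ≤ n → StronglyMeasurable[ℱ i] (v i)
  integrable : ∀ i, 1 ≤ i → i ≤ n → Integrable (v i) μ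
  condExp_eq_zero : ∀ i, 1 ≤ i → i ≤ n → μ[v i | ℱ (i - 1)] =ᵐ[μ] 0

namespace IsMartingaleDifference

variable {v : ℕ → Ω → E} {ℱ : Filtration ℕ m₀} {n : ℕ}

lemma mono {k : ℕ} (hv : IsMartingaleDifference v ℱ μ n) (hkn : k ≤ n) :
    IsMartingaleDifference v ℱ μ k where
  stronglyMeasurable i hi hik := hv.stronglyMeasurable i hi (hik.trans hkn)
  integrable i hi hik := hv.integrable i hi (hik.trans hkn)
  condExp_eq_zero i hi hik := hv.condExp_eq_zero i hi (hik.trans hkn)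

lemma stronglyMeasurable_sum_smul (hv : IsMartingaleDifference v ℱ μ n) (a : ℕ → ℝ) :
    StronglyMeasurable[ℱ n] fun ω => ∑ i ∈ Finset.Icc 1 n, a i • v i ω :=
  Finset.stronglyMeasurable_fun_sum _ fun i hi => by
    obtain ⟨hi, hin⟩ := Finset.mem_Icc.1 hi
    exact ((hv.stronglyMeasurable i hi hin).mono (ℱ.mono hin)).const_smul (a i)

end IsMartingaleDifference

end MartingaleDifference

section MomentBounds

open scoped RealInnerProductSpace ENNReal

variable {Ω E : Type*} {m₀ : MeasurableSpace Ω} {μ : Measure Ω}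
  [NormedAddCommGroup E]

lemma memLp_ofReal_iff_integrable_norm_rpow {p : ℝ} (hp : 0 < p) {f : Ω → E}
    (hf : AEStronglyMeasurable f μ) :
    MemLp f (.ofReal p) μ ↔ Integrable (fun ω => ‖f ω‖ ^ p) μ := by
  rw [← integrable_norm_rpow_iff hf (by simpa) ENNReal.ofReal_ne_top,
    ENNReal.toReal_ofReal hp.le]

lemma memLp_ofReal_iff_lintegral_enorm_rpow_lt_top {p : ℝ} (hp : 0 < p) {f : Ω → E}
    (hf : AEStronglyMeasurable f μ) :
    MemLp f (.ofReal p) μ ↔ ∫⁻ ω, ‖f ω‖ₑ ^ p ∂μ < ∞ := by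
  rw [MemLp, and_iff_right hf, eLpNorm_lt_top_iff_lintegral_rpow_enorm_lt_top (by simpa)
    ENNReal.ofReal_ne_top, ENNReal.toReal_ofReal hp.le]

lemma ofReal_integral_norm_rpow {p : ℝ} (hp : 0 < p) {f : Ω → E} (hf : MemLp f (.ofReal p) μ) :
    ENNReal.ofReal (∫ ω, ‖f ω‖ ^ p ∂μ) = ∫⁻ ω, ‖f ω‖ₑ ^ p ∂μ := by
  rw [ofReal_integral_eq_lintegral_ofReal
    ((memLp_ofReal_iff_integrable_norm_rpow hp hf.1).1 hf) (ae_of_all _ fun ω => by positivity)]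
  simp only [← ENNReal.ofReal_rpow_of_nonneg (norm_nonneg _) hp.le, ofReal_norm]

variable [InnerProductSpace ℝ E]

lemma integrable_inner_norm_rpow_smul {p : ℝ} (hp : 2 ≤ p) {X V : Ω → E}
    (hX : MemLp X (.ofReal p) μ) (hV : MemLp V (.ofReal p) μ) :
    Integrable (fun ω => ⟪‖X ω‖ ^ (p - 2) • X ω, V ω⟫) μ := by
  have hp₀ : 0 < p := by linarith
  have hsum : Integrable (fun ω => (‖X ω‖ + ‖V ω‖) ^ p) μ := by
    have hXV := hX.norm.add hV.norm
    refine ((memLp_ofReal_iff_integrable_norm_rpow hp₀ hXV.1).1 hXV).congr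
      (ae_of_all _ fun ω => ?_)
    beta_reduce
    rw [Pi.add_apply, Real.norm_of_nonneg (by positivity)]
  have hmeas : AEStronglyMeasurable (fun ω => ‖X ω‖ ^ (p - 2)) μ :=
    (hX.1.norm.aemeasurable.pow_const _).aestronglyMeasurable
  refine hsum.mono' ((hmeas.smul hX.1).inner hV.1) (ae_of_all _ fun ω => ?_)
  calc ‖⟪‖X ω‖ ^ (p - 2) • X ω, V ω⟫‖ ≤ ‖X ω‖ ^ (p - 2) * ‖X ω‖ * ‖V ω‖ := by
        refine (norm_inner_le_norm _ _).trans_eq ?_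
        rw [norm_smul, Real.norm_of_nonneg (by positivity)]
    _ ≤ (‖X ω‖ + ‖V ω‖) ^ (p - 2) * (‖X ω‖ + ‖V ω‖) * (‖X ω‖ + ‖V ω‖) := by
        have hX_le : ‖X ω‖ ≤ ‖X ω‖ + ‖V ω‖ := le_add_of_nonneg_right (norm_nonneg _)
        have hV_le : ‖V ω‖ ≤ ‖X ω‖ + ‖V ω‖ := le_add_of_nonneg_left (norm_nonneg _)
        gcongr
    _ = (‖X ω‖ + ‖V ω‖) ^ p := by
        rw [mul_assoc, ← sq, rpow_sub_two_mul_sq hp₀ (by positivity)]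

variable [CompleteSpace E]

lemma integral_inner_eq_zero_of_condExp_eq_zero {m : MeasurableSpace Ω} (hm : m ≤ m₀)
    [SigmaFinite (μ.trim hm)] {f g : Ω → E} (hf : AEStronglyMeasurable[m] f μ)
    (hg : Integrable g μ) (hfg : Integrable (fun ω => ⟪f ω, g ω⟫) μ) (hg₀ : μ[g | m] =ᵐ[μ] 0) :
    ∫ ω, ⟪f ω, g ω⟫ ∂μ = 0 := by
  have pull_out : μ[fun ω => ⟪f ω, g ω⟫ | m] =ᵐ[μ] fun ω => ⟪f ω, (μ[g | m]) ω⟫ :=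
    condExp_bilin_of_aestronglyMeasurable_left (innerSL ℝ) hf hfg hg
  have condExp_eq_zero : μ[fun ω => ⟪f ω, g ω⟫ | m] =ᵐ[μ] 0 := by
    filter_upwards [pull_out, hg₀] with ω hω hgω
    rw [hω, hgω, Pi.zero_apply, Pi.zero_apply, inner_zero_right]
  rw [← integral_condExp hm, integral_congr_ae condExp_eq_zero, Pi.zero_def, integral_zero]

lemma integral_norm_add_smul_rpow_le_of_condExp_eq_zero {p r : ℝ} (hp : 2 ≤ p) (hr : |r| ≤ 1)
    {m : MeasurableSpace Ω} (hm : m ≤ m₀) [SigmaFinite (μ.trim hm)] {X V : Ω → E}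
    (hXm : StronglyMeasurable[m] X) (hX : MemLp X (.ofReal p) μ)
    (hV : MemLp V (.ofReal p) μ) (hVi : Integrable V μ) (hV₀ : μ[V | m] =ᵐ[μ] 0) :
    ∫ ω, ‖X ω + r • V ω‖ ^ p ∂μ ≤ ∫ ω, ‖X ω‖ ^ p ∂μ
      + p ^ 2 * 2 ^ (p - 1) * r ^ 2 * (∫ ω, ‖X ω‖ ^ p ∂μ + ∫ ω, ‖V ω‖ ^ p ∂μ) := by
  have hp₀ : 0 < p := by linarith
  have integrable_rpow {f : Ω → E} (hf : MemLp f (.ofReal p) μ) :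
      Integrable (fun ω => ‖f ω‖ ^ p) μ := (memLp_ofReal_iff_integrable_norm_rpow hp₀ hf.1).1 hf
  have hXp := integrable_rpow hX
  have hXV := integrable_inner_norm_rpow_smul hp hX hV
  have hgrad : StronglyMeasurable[m] fun ω => ‖X ω‖ ^ (p - 2) • X ω :=
    (hXm.norm.measurable.pow_const _).stronglyMeasurable.smul hXm
  have first_order : ∫ ω, ⟪‖X ω‖ ^ (p - 2) • X ω, V ω⟫ ∂μ = 0 :=
    integral_inner_eq_zero_of_condExp_eq_zero hm hgrad.aestronglyMeasurable hVi hXV hV₀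
  have hfirst : Integrable
      (fun ω => ‖X ω‖ ^ p + p * r * ⟪‖X ω‖ ^ (p - 2) • X ω, V ω⟫) μ :=
    hXp.add (hXV.const_mul _)
  have herror : Integrable
      (fun ω => p ^ 2 * 2 ^ (p - 1) * r ^ 2 * (‖X ω‖ ^ p + ‖V ω‖ ^ p)) μ :=
    (hXp.add (integrable_rpow hV)).const_mul _
  calc ∫ ω, ‖X ω + r • V ω‖ ^ p ∂μ
      ≤ ∫ ω, (‖X ω‖ ^ p + p * r * ⟪‖X ω‖ ^ (p - 2) • X ω, V ω⟫
          + p ^ 2 * 2 ^ (p - 1) * r ^ 2 * (‖X ω‖ ^ p + ‖V ω‖ ^ p)) ∂μ :=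
        integral_mono (integrable_rpow (hX.add (hV.const_smul r))) (hfirst.add herror)
          fun ω => norm_add_smul_rpow_le hp hr (X ω) (V ω)
    _ = _ := by
        rw [integral_add hfirst herror, integral_add hXp (hXV.const_mul _), integral_const_mul,
          integral_const_mul, integral_add hXp (integrable_rpow hV), first_order, mul_zero,
          add_zero]

namespace IsMartingaleDifference

variable {v : ℕ → Ω → E} {ℱ : Filtration ℕ m₀} {n : ℕ}

theorem integral_norm_sum_smul_rpow_add_le [SigmaFiniteFiltration μ ℱ] {p M : ℝ} {a : ℕ → ℝ}
    (hv : IsMartingaleDifference v ℱ μ n) (hp : 2 ≤ p) (ha : ∀ i, 1 ≤ i → i ≤ n → |a i| ≤ 1)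
    (hvp : ∀ i, 1 ≤ i → i ≤ n → MemLp (v i) (.ofReal p) μ)
    (hM : ∀ i, 1 ≤ i → i ≤ n → ∫ ω, ‖v i ω‖ ^ p ∂μ ≤ M) :
    ∫ ω, ‖∑ i ∈ Finset.Icc 1 n, a i • v i ω‖ ^ p ∂μ + M ≤
      Real.exp (p ^ 2 * 2 ^ (p - 1) * ∑ i ∈ Finset.Icc 1 n, a i ^ 2) * M := by
  induction n with
  | zero => simp [Real.zero_rpow (by linarith : p ≠ 0)]
  | succ n ih =>
    have hlast : 1 ≤ n + 1 := n.succ_pos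
    have hv' := hv.mono n.le_succ
    have hvp' (i) (hi : 1 ≤ i) (hin : i ≤ n) := hvp i hi (hin.trans n.le_succ)
    have ih := ih hv' (fun i hi hin => ha i hi (hin.trans n.le_succ)) hvp'
      fun i hi hin => hM i hi (hin.trans n.le_succ)
    set c := p ^ 2 * 2 ^ (p - 1)
    have : 0 ≤ c := by positivity
    set S : Ω → E := fun ω => ∑ i ∈ Finset.Icc 1 n, a i • v i ω
    set I := ∫ ω, ‖S ω‖ ^ p ∂μ
    have : 0 ≤ I := by positivity
    have hM₀ : 0 ≤ M := le_trans (by positivity) (hM _ hlast le_rfl)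
    have hS : MemLp S (.ofReal p) μ := memLp_sum_smul hvp' a
    have increment : ∫ ω, ‖S ω + a (n + 1) • v (n + 1) ω‖ ^ p ∂μ ≤
        I + c * a (n + 1) ^ 2 * (I + ∫ ω, ‖v (n + 1) ω‖ ^ p ∂μ) :=
      integral_norm_add_smul_rpow_le_of_condExp_eq_zero hp (ha _ hlast le_rfl) (ℱ.le n)
        (hv'.stronglyMeasurable_sum_smul a) hS (hvp _ hlast le_rfl) (hv.integrable _ hlast le_rfl)
        (hv.condExp_eq_zero _ hlast le_rfl)
    simp only [Finset.sum_Icc_succ_top n.succ_pos]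
    calc ∫ ω, ‖S ω + a (n + 1) • v (n + 1) ω‖ ^ p ∂μ + M
        ≤ I + c * a (n + 1) ^ 2 * (I + M) + M := by
          grw [increment, hM _ hlast le_rfl]
      _ = (c * a (n + 1) ^ 2 + 1) * (I + M) := by ring
      _ ≤ Real.exp (c * a (n + 1) ^ 2) *
            (Real.exp (c * ∑ i ∈ Finset.Icc 1 n, a i ^ 2) * M) := by
          gcongr
          exact Real.add_one_le_exp _
      _ = _ := by
          rw [← mul_assoc, ← Real.exp_add]
          ring_nf

end IsMartingaleDifference

lemma ofReal_abs_pow_eq_enorm_rpow (x : ℝ) (k : ℕ) :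
    ENNReal.ofReal (|x| ^ k) = ‖x‖ₑ ^ (k : ℝ) := by
  rw [ENNReal.ofReal_pow (abs_nonneg x), ← Real.enorm_eq_ofReal_abs, ENNReal.rpow_natCast]

theorem stmt12_general {p : ℝ} (hp : 2 ≤ p) {n : ℕ} {ℱ : Filtration ℕ m₀}
    [SigmaFiniteFiltration μ ℱ] {v : ℕ → Ω → E} (hv : IsMartingaleDifference v ℱ μ n)
    {M : ℝ≥0∞} (hM : ∀ i, 1 ≤ i → i ≤ n → ∫⁻ ω, ‖v i ω‖ₑ ^ p ∂μ ≤ M) :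
    ∫⁻ ω, ‖(√n)⁻¹ • ∑ i ∈ Finset.Icc 1 n, v i ω‖ₑ ^ p ∂μ ≤
      ENNReal.ofReal (Real.exp (p ^ 2 * 2 ^ (p - 1))) * M := by
  have hp₀ : 0 < p := by linarith
  rcases n.eq_zero_or_pos with rfl | hn
  · simp [hp₀]
  rcases eq_or_ne M ∞ with rfl | hM_top
  · simp [ENNReal.mul_top, Real.exp_pos]
  lift M to NNReal using hM_top
  have hvp : ∀ i, 1 ≤ i → i ≤ n → MemLp (v i) (.ofReal p) μ := fun i hi hin =>
    (memLp_ofReal_iff_lintegral_enorm_rpow_lt_top hp₀ (hv.integrable i hi hin).1).2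
      ((hM i hi hin).trans_lt ENNReal.coe_lt_top)
  have hint : ∀ i, 1 ≤ i → i ≤ n → ∫ ω, ‖v i ω‖ ^ p ∂μ ≤ M := fun i hi hin => by
    rw [← ENNReal.ofReal_le_ofReal_iff NNReal.zero_le_coe,
      ofReal_integral_norm_rpow hp₀ (hvp i hi hin), ENNReal.ofReal_coe_nnreal]
    exact hM i hi hin
  have hweight : ∀ i, 1 ≤ i → i ≤ n → |(√n)⁻¹| ≤ 1 := fun _ _ _ => by
    rw [abs_of_nonneg (by positivity)]
    exact inv_le_one_of_one_le₀ (Real.one_le_sqrt.2 (by exact_mod_cast hn))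
  have hweight_sq : ∑ _i ∈ Finset.Icc 1 n, (√n)⁻¹ ^ 2 = 1 := by
    simp [hn.ne']
  have bound := hv.integral_norm_sum_smul_rpow_add_le hp hweight hvp hint
  rw [hweight_sq, mul_one] at bound
  have hsum : MemLp (fun ω => ∑ i ∈ Finset.Icc 1 n, (√n)⁻¹ • v i ω) (.ofReal p) μ :=
    memLp_sum_smul hvp _
  simp only [Finset.smul_sum]
  rw [← ofReal_integral_norm_rpow hp₀ hsum, ← ENNReal.ofReal_coe_nnreal,
    ← ENNReal.ofReal_mul (Real.exp_nonneg _)]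
  exact ENNReal.ofReal_le_ofReal ((le_add_of_nonneg_right NNReal.zero_le_coe).trans bound)

end MomentBounds

/-- For each integer `k ≥ 2` there is a constant `C = C_k`, depending only
on `k`, such that for every martingale difference sequence `v 1, …, v n` (w.r.t. a filtration
`ℱ`) with `E[|v i|^l] ≤ M` for all `l = 1, …, k`, we have
`E[|n^{-1/2} ∑_{i=1}^n v i|^k] ≤ C · M`.  Expectations of nonnegative integrands are
expressed as lower Lebesgue integrals. -/
theorem stmt12 (k : ℕ) (hk : 2 ≤ k) :
    ∃ C : ℝ, 0 < C ∧
      ∀ (M : ℝ), 0 ≤ M →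
      ∀ (n : ℕ) (Ω : Type) [m0 : MeasurableSpace Ω] (P : Measure Ω)
        [IsProbabilityMeasure P]
        (ℱ : Filtration ℕ m0) (v : ℕ → Ω → ℝ),
        (∀ i, 1 ≤ i → i ≤ n → StronglyMeasurable[ℱ i] (v i)) →
        (∀ i, 1 ≤ i → i ≤ n → Integrable (v i) P) →
        (∀ i, 1 ≤ i → i ≤ n → P[v i|ℱ (i - 1)] =ᵐ[P] 0) →
        (∀ i, 1 ≤ i → i ≤ n → ∀ l : ℕ, 1 ≤ l → l ≤ k →
          ∫⁻ ω, ENNReal.ofReal (|v i ω| ^ l) ∂P ≤ ENNReal.ofReal M) →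
        ∫⁻ ω, ENNReal.ofReal (|(1 / Real.sqrt n) * ∑ i ∈ Finset.Icc 1 n, v i ω| ^ k) ∂P
          ≤ ENNReal.ofReal (C * M) := by
  refine ⟨Real.exp ((k : ℝ) ^ 2 * 2 ^ ((k : ℝ) - 1)), Real.exp_pos _,
    fun M _ n Ω _ P _ ℱ v hmeas hint hcond hmom => ?_⟩
  simp only [ofReal_abs_pow_eq_enorm_rpow, ENNReal.ofReal_mul (Real.exp_nonneg _),
    one_div] at hmom ⊢
  exact stmt12_general (by exact_mod_cast hk) ⟨hmeas, hint, hcond⟩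
    fun i hi hin => hmom i hi hin k (by omega) le_rfl
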